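/- Let A be a connected open subset of ℂ⁴ and μ : A → ℂ holomorphic. Let ι : ℝ⁴ → ℂ⁴ be the inclusion of real points and assume A_ℝ = {x ∈ ℝ⁴ : ι(x) ∈ A} is non-empty. Suppose the restriction ν = μ∘ι satisfies on A_ℝ the equations ∂_{q̄₁}ν − ν·∂_{q₂}ν = 0 and ∂_{q̄₂}ν + ν·∂_{q₁}ν = 0, where in the real coordinates (x₀,x₁,x₂,x₃): ∂_{q₁} = ½(∂₀ − i∂₁), ∂_{q̄₁} = ½(∂₀ + i∂₁), ∂_{q₂} = ½(∂₂ − i∂₃), ∂_{q̄₂} = ½(∂₂ + i∂₃). Then μ satisfies on all of A the equations ∂_{q̃₁}μ − μ·∂_{q₂}μ = 0 and ∂_{q̃₂}μ + μ·∂_{q₁}μ = 0, where now ∂_{q₁} = ½(∂_{z₀} − i∂_{z₁}), ∂_{q̃₁} = ½(∂_{z₀} + i∂_{z₁}), ∂_{q₂} = ½(∂_{z₂} − i∂_{z₃}), ∂_{q̃₂} = ½(∂_{z₂} + i∂_{z₃}) are complex partial derivatives on ℂ⁴. -/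

import Mathlib

noncomputable section

/-- Real partial derivative in the `i`-th coordinate direction of a map `ℝ⁴ → ℂ`. -/
def pdR (i : Fin 4) (f : (Fin 4 → ℝ) → ℂ) (x : Fin 4 → ℝ) : ℂ :=
  fderiv ℝ f x (Pi.single i 1)

/-- Complex partial derivative in the `i`-th coordinate direction of a map `ℂ⁴ → ℂ`. -/
def pdC (i : Fin 4) (f : (Fin 4 → ℂ) → ℂ) (z : Fin 4 → ℂ) : ℂ :=
  fderiv ℂ f z (Pi.single i 1)

/-- The inclusion of the real points `ℝ⁴ ↪ ℂ⁴`. -/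
def iotaR (x : Fin 4 → ℝ) : Fin 4 → ℂ := fun i => (x i : ℂ)

open Filter Topology Metric

/-- The directional derivative of a holomorphic function is holomorphic along complex lines. -/
lemma aux_dir {E : Type*} [NormedAddCommGroup E] [NormedSpace ℂ E] {A : Set E}
    (hA : IsOpen A) {f : E → ℂ} (hf : DifferentiableOn ℂ f A) (e : E) (z : E) (hz : z ∈ A)
    (v : E) : DifferentiableAt ℂ (fun t : ℂ => fderiv ℂ f (z + t • v) e) 0 := by
  have hdA : ∀ w ∈ A, DifferentiableAt ℂ f w := fun w hw => hf.differentiableAt (hA.mem_nhds hw)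
  have hev : ∀ᶠ w in 𝓝 z, w ∈ A ∧ dist (f w) (f z) < 1 :=
    Filter.Eventually.and (hA.mem_nhds hz)
      ((hdA z hz).continuousAt.eventually (ball_mem_nhds (f z) one_pos))
  obtain ⟨r, hr, hball⟩ := Metric.eventually_nhds_iff.1 hev
  set δ : ℝ := r / (‖v‖ + ‖e‖ + 1) with hδdef
  have hpos : 0 < ‖v‖ + ‖e‖ + 1 := by positivity
  have hδ : 0 < δ := by positivity
  have hδr : δ * (‖v‖ + ‖e‖ + 1) = r := by rw [hδdef]; field_simp
  have hmem : ∀ t s : ℂ, t ∈ ball (0:ℂ) δ → s ∈ ball (0:ℂ) δ →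
      dist (z + t • v + s • e) z < r := by
    intro t s ht hs
    rw [mem_ball_zero_iff] at ht hs
    have h1 : z + t • v + s • e - z = t • v + s • e := by abel
    rw [dist_eq_norm, h1]
    have h2 := norm_add_le (t • v) (s • e)
    rw [norm_smul, norm_smul] at h2
    have h3 := mul_le_mul_of_nonneg_right ht.le (norm_nonneg v)
    have h4 := mul_le_mul_of_nonneg_right hs.le (norm_nonneg e)
    nlinarith
  have hmA : ∀ t s : ℂ, t ∈ ball (0:ℂ) δ → s ∈ ball (0:ℂ) δ → z + t • v + s • e ∈ A :=
    fun t s ht hs => (hball (hmem t s ht hs)).1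
  have h0 : (0:ℂ) ∈ ball (0:ℂ) δ := mem_ball_self hδ
  let g : ℂ → ℂ → ℂ := fun t s => f (z + t • v + s • e)
  have hgs : ∀ t ∈ ball (0:ℂ) δ, DifferentiableOn ℂ (g t) (ball 0 δ) := by
    intro t ht s hs
    refine DifferentiableAt.differentiableWithinAt ?_
    exact DifferentiableAt.comp (f := fun s : ℂ => z + t • v + s • e) s
      (hdA _ (hmA t s ht hs)) (by fun_prop)
  have hgt : ∀ s ∈ ball (0:ℂ) δ, DifferentiableOn ℂ (fun t => g t s) (ball 0 δ) := by
    intro s hs t ht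
    refine DifferentiableAt.differentiableWithinAt ?_
    exact DifferentiableAt.comp (f := fun t : ℂ => z + t • v + s • e) t
      (hdA _ (hmA t s ht hs)) (by fun_prop)
  have hderiv : ∀ t ∈ ball (0:ℂ) δ, deriv (g t) 0 = fderiv ℂ f (z + t • v) e := by
    intro t ht
    have hd : HasDerivAt (fun s : ℂ => z + t • v + s • e) e 0 := by
      simpa using ((hasDerivAt_id (0:ℂ)).smul_const e).const_add (z + t • v)
    have hd2 := (hdA _ (hmA t 0 ht h0)).hasFDerivAt.comp_hasDerivAt (0:ℂ) hd
    have := hd2.deriv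
    simpa [g, Function.comp_def] using this
  have hmaps : ∀ t ∈ ball (0:ℂ) δ, Set.MapsTo (g t) (ball 0 δ) (ball (g t 0) 2) := by
    intro t ht s hs
    have h1 := (hball (hmem t s ht hs)).2
    have h2 := (hball (hmem t 0 ht h0)).2
    rw [mem_ball]
    have := dist_triangle_right (g t s) (g t 0) (f z)
    simp only [g] at *
    linarith
  have hds : ∀ t ∈ ball (0:ℂ) δ, ∀ s ∈ ball (0:ℂ) δ, ‖dslope (g t) 0 s‖ ≤ 2 / δ := by
    intro t ht s hs
    exact Complex.norm_dslope_le_div_of_mapsTo_ball (hgs t ht)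
      ((hmaps t ht).mono_right ball_subset_closedBall) hs
  have hdd : ∀ t ∈ ball (0:ℂ) δ, ∀ s ∈ ball (0:ℂ) δ,
      dist (dslope (g t) 0 s) (dslope (g t) 0 0) ≤ (4 / δ) / δ * dist s 0 := by
    intro t ht s hs
    refine Complex.dist_le_div_mul_dist_of_mapsTo_ball (R₁ := δ) ?_ ?_ hs
    · exact (Complex.differentiableOn_dslope (ball_mem_nhds _ hδ)).2 (hgs t ht)
    · intro s' hs'
      rw [mem_closedBall, dist_eq_norm]
      have := norm_sub_le (dslope (g t) 0 s') (dslope (g t) 0 0)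
      have h1 := hds t ht s' hs'
      have h2 := hds t ht 0 h0
      have h3 : 4 / δ = 2 / δ + 2 / δ := by ring
      linarith
  have hunif : TendstoUniformlyOn (fun (s : ℂ) (t : ℂ) => dslope (g t) 0 s)
      (fun t => fderiv ℂ f (z + t • v) e) (𝓝[≠] (0:ℂ)) (ball 0 δ) := by
    rw [Metric.tendstoUniformlyOn_iff]
    intro ε hε
    have hlim : Tendsto (fun s : ℂ => (4 / δ) / δ * dist s 0) (𝓝[≠] (0:ℂ)) (𝓝 0) := by
      have : Continuous (fun s : ℂ => (4 / δ) / δ * dist s 0) := by fun_prop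
      have h := this.tendsto 0
      simp only [dist_self, mul_zero] at h
      exact h.mono_left nhdsWithin_le_nhds
    filter_upwards [hlim.eventually (gt_mem_nhds hε),
      nhdsWithin_le_nhds (ball_mem_nhds (0:ℂ) hδ)] with s hs1 hs2 t ht
    rw [← hderiv t ht, ← dslope_same (g t) 0, dist_comm]
    exact (hdd t ht s hs2).trans_lt hs1
  have hdiff : DifferentiableOn ℂ (fun t : ℂ => fderiv ℂ f (z + t • v) e) (ball 0 δ) := by
    refine hunif.tendstoLocallyUniformlyOn.differentiableOn ?_ isOpen_ball
    filter_upwards [self_mem_nhdsWithin,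
      nhdsWithin_le_nhds (ball_mem_nhds (0:ℂ) hδ)] with s hs1 hs2
    have : (fun t => dslope (g t) 0 s) = fun t => (s - 0)⁻¹ • (g t s - g t 0) := by
      funext t
      rw [dslope_of_ne _ hs1, slope_def_module]
    show DifferentiableOn ℂ (fun t => dslope (g t) 0 s) _
    rw [this]
    exact ((hgt s hs2).sub (hgt 0 h0)).const_smul ((s - 0)⁻¹)
  exact hdiff.differentiableAt (ball_mem_nhds _ hδ)

lemma aux_line {E : Type*} [NormedAddCommGroup E] [NormedSpace ℂ E] {A : Set E} {F : E → ℂ}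
    (hF : ∀ z ∈ A, ∀ v, DifferentiableAt ℂ (fun t : ℂ => F (z + t • v)) 0)
    {c : E} {r : ℝ} (hr : ball c r ⊆ A) {w v : E} (hw : w ∈ ball c r)
    (hfreq : ∃ᶠ t in 𝓝[≠] (0:ℂ), F (w + t • v) = 0) {t : ℂ} (ht : w + t • v ∈ ball c r) :
    F (w + t • v) = 0 := by
  let S : Set ℂ := {t | w + t • v ∈ ball c r}
  have hSo : IsOpen S := isOpen_ball.preimage (by fun_prop : Continuous fun t : ℂ => w + t • v)
  have hSc : Convex ℝ S := by
    intro a ha b hb p q hp hq hpq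
    have h := (convex_ball c r) ha hb hp hq hpq
    show w + (p • a + q • b) • v ∈ ball c r
    convert h using 1
    have : w = (p + q) • w := by rw [hpq, one_smul]
    conv_lhs => rw [this]
    rw [add_smul, add_smul, smul_add, smul_add, smul_assoc, smul_assoc]
    abel
  have hd : DifferentiableOn ℂ (fun t : ℂ => F (w + t • v)) S := by
    intro s hs
    have h := hF _ (hr hs) v
    have h2 : DifferentiableAt ℂ (fun t : ℂ => F (w + s • v + (t - s) • v)) s := by
      refine DifferentiableAt.comp (g := fun t : ℂ => F (w + s • v + t • v))
        (f := fun t : ℂ => t - s) s ?_ (by fun_prop)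
      simpa using h
    refine DifferentiableAt.differentiableWithinAt ?_
    convert h2 using 3
    rw [sub_smul]; abel
  have h0 : (0:ℂ) ∈ S := by simpa [S] using hw
  exact (hd.analyticOnNhd hSo).eqOn_zero_of_preconnected_of_frequently_eq_zero
    hSc.isPreconnected h0 hfreq ht

lemma aux_ident {E : Type*} [NormedAddCommGroup E] [NormedSpace ℂ E] {A : Set E} {F : E → ℂ}
    (hA : IsOpen A) (hc : IsPreconnected A)
    (hF : ∀ z ∈ A, ∀ v, DifferentiableAt ℂ (fun t : ℂ => F (z + t • v)) 0)
    {z₀ : E} (hz₀ : z₀ ∈ A) (h : ∀ᶠ z in 𝓝 z₀, F z = 0) : ∀ z ∈ A, F z = 0 := by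
  have key : A ⊆ {z | ∀ᶠ w in 𝓝 z, F w = 0} := by
    refine hc.subset_of_closure_inter_subset isOpen_setOfPred_eventually_nhds ⟨z₀, hz₀, h⟩ ?_
    rintro c ⟨hcl, hcA⟩
    obtain ⟨r, hr, hball⟩ := Metric.isOpen_iff.1 hA c hcA
    obtain ⟨w, hw, hwc⟩ := Metric.mem_closure_iff.1 hcl r hr
    rw [dist_comm] at hwc
    filter_upwards [ball_mem_nhds c hr] with z hz
    have hcont : Tendsto (fun t : ℂ => w + t • (z - w)) (𝓝[≠] 0) (𝓝 w) := by
      have : Continuous (fun t : ℂ => w + t • (z - w)) := by fun_prop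
      have h := this.tendsto 0
      simp only [zero_smul, add_zero] at h
      exact h.mono_left nhdsWithin_le_nhds
    have := aux_line hF hball (w := w) (v := z - w) (t := 1) hwc
      (hcont.eventually hw).frequently (by simpa using hz)
    simpa using this
  exact fun z hz => (key hz).self_of_nhds

lemma aux_real {A : Set (Fin 4 → ℂ)} {F : (Fin 4 → ℂ) → ℂ}
    (hA : IsOpen A) (hc : IsPreconnected A)
    (hF : ∀ z ∈ A, ∀ v, DifferentiableAt ℂ (fun t : ℂ => F (z + t • v)) 0)
    (hne : {x : Fin 4 → ℝ | iotaR x ∈ A}.Nonempty)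
    (h : ∀ x : Fin 4 → ℝ, iotaR x ∈ A → F (iotaR x) = 0) : ∀ z ∈ A, F z = 0 := by
  obtain ⟨x₀, hx₀⟩ := hne
  refine aux_ident hA hc hF hx₀ ?_
  obtain ⟨r, hr, hball⟩ := Metric.isOpen_iff.1 hA _ hx₀
  filter_upwards [ball_mem_nhds _ hr] with z hz
  let x : Fin 4 → ℝ := fun i => (z i).re
  let y : Fin 4 → ℝ := fun i => (z i).im
  have hzxy : iotaR x + Complex.I • iotaR y = z := by
    funext i
    simp only [Pi.add_apply, Pi.smul_apply, iotaR, smul_eq_mul, x, y]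
    rw [mul_comm]; exact Complex.re_add_im _
  have hx : iotaR x ∈ ball (iotaR x₀) r := by
    rw [mem_ball, dist_pi_lt_iff hr] at hz ⊢
    intro i
    refine lt_of_le_of_lt ?_ (hz i)
    rw [dist_eq_norm, dist_eq_norm]
    have := Complex.abs_re_le_norm (z i - iotaR x₀ i)
    simp only [iotaR, x] at *
    rw [← Complex.ofReal_sub, Complex.norm_real, Real.norm_eq_abs]
    simpa using this
  have hofR : Tendsto (fun t : ℝ => (t : ℂ)) (𝓝[≠] 0) (𝓝[≠] 0) := by
    refine tendsto_nhdsWithin_iff.2 ⟨?_, ?_⟩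
    · have := Complex.continuous_ofReal.tendsto 0
      simp only [Complex.ofReal_zero] at this
      exact this.mono_left nhdsWithin_le_nhds
    · filter_upwards [self_mem_nhdsWithin] with t ht
      simpa using ht
  have hfreq : ∃ᶠ t in 𝓝[≠] (0:ℂ), F (iotaR x + t • iotaR y) = 0 := by
    refine hofR.frequently (Eventually.frequently ?_)
    have hcont : Continuous (fun t : ℝ => iotaR x + (t : ℂ) • iotaR y) := by fun_prop
    have hcA := (hA.preimage hcont).mem_nhds (x := 0) (by simpa using hball hx)
    filter_upwards [nhdsWithin_le_nhds hcA] with t ht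
    have heq : iotaR x + (t : ℂ) • iotaR y = iotaR (x + t • y) := by
      funext i; simp [iotaR]
    have ht' : iotaR x + (t : ℂ) • iotaR y ∈ A := ht
    rw [heq] at ht' ⊢
    exact h _ ht'
  have := aux_line hF hball hx hfreq (t := Complex.I) (by rwa [hzxy])
  rwa [hzxy] at this

lemma aux_pd {A : Set (Fin 4 → ℂ)} (hA : IsOpen A) {μ : (Fin 4 → ℂ) → ℂ}
    (hμ : DifferentiableOn ℂ μ A) {x : Fin 4 → ℝ} (hx : iotaR x ∈ A) (i : Fin 4) :
    pdR i (μ ∘ iotaR) x = pdC i μ (iotaR x) := by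
  let L : (Fin 4 → ℝ) →L[ℝ] (Fin 4 → ℂ) :=
    ContinuousLinearMap.pi fun j => Complex.ofRealCLM.comp (ContinuousLinearMap.proj j)
  have hL : HasFDerivAt iotaR L x := L.hasFDerivAt
  have h := ((hμ.differentiableAt (hA.mem_nhds hx)).hasFDerivAt.restrictScalars ℝ).comp x hL
  unfold pdR pdC
  rw [h.fderiv]
  have hs : L (Pi.single i 1) = Pi.single i 1 := by
    funext j
    by_cases hj : j = i
    · subst hj; simp [L]
    · simp [L, hj]
  simp [hs]

/-- Proposition 5.2 (one implication, in coordinates): if a holomorphic `μ` on a connected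
open subset `A ⊆ ℂ⁴` restricts on the real points to a map representing an integrable
Hermitian structure, then `μ` satisfies the `α`-plane integrability equations on all of `A`. -/
theorem hermitian_integrability_extends_to_alpha_planes
    (A : Set (Fin 4 → ℂ)) (hA : IsOpen A) (hconn : IsConnected A)
    (μ : (Fin 4 → ℂ) → ℂ) (hμ : DifferentiableOn ℂ μ A)
    (hne : {x : Fin 4 → ℝ | iotaR x ∈ A}.Nonempty)
    (heq1 : ∀ x : Fin 4 → ℝ, iotaR x ∈ A →
      (pdR 0 (μ ∘ iotaR) x + Complex.I * pdR 1 (μ ∘ iotaR) x) / 2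
        - μ (iotaR x) * ((pdR 2 (μ ∘ iotaR) x - Complex.I * pdR 3 (μ ∘ iotaR) x) / 2) = 0)
    (heq2 : ∀ x : Fin 4 → ℝ, iotaR x ∈ A →
      (pdR 2 (μ ∘ iotaR) x + Complex.I * pdR 3 (μ ∘ iotaR) x) / 2
        + μ (iotaR x) * ((pdR 0 (μ ∘ iotaR) x - Complex.I * pdR 1 (μ ∘ iotaR) x) / 2) = 0) :
    ∀ z ∈ A,
      (pdC 0 μ z + Complex.I * pdC 1 μ z) / 2
        - μ z * ((pdC 2 μ z - Complex.I * pdC 3 μ z) / 2) = 0 ∧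
      (pdC 2 μ z + Complex.I * pdC 3 μ z) / 2
        + μ z * ((pdC 0 μ z - Complex.I * pdC 1 μ z) / 2) = 0 := by
  have hpd : ∀ i, ∀ z ∈ A, ∀ v,
      DifferentiableAt ℂ (fun t : ℂ => pdC i μ (z + t • v)) 0 :=
    fun i z hz v => aux_dir hA hμ _ z hz v
  have hm : ∀ z ∈ A, ∀ v, DifferentiableAt ℂ (fun t : ℂ => μ (z + t • v)) 0 := by
    intro z hz v
    refine DifferentiableAt.comp (g := μ) (f := fun t : ℂ => z + t • v) 0 ?_ (by fun_prop)
    simpa using hμ.differentiableAt (hA.mem_nhds hz)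
  intro z hz
  constructor
  · refine aux_real (F := fun z => (pdC 0 μ z + Complex.I * pdC 1 μ z) / 2
        - μ z * ((pdC 2 μ z - Complex.I * pdC 3 μ z) / 2)) hA hconn.isPreconnected ?_ hne ?_ z hz
    · intro z hz v
      have h0 := hpd 0 z hz v
      have h1 := hpd 1 z hz v
      have h2 := hpd 2 z hz v
      have h3 := hpd 3 z hz v
      have h4 := hm z hz v
      exact (((h0.add (h1.const_mul _)).div_const 2).sub (h4.mul ((h2.sub (h3.const_mul _)).div_const 2)))
    · intro x hx
      have := heq1 x hx
      simpa only [aux_pd hA hμ hx] using this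
  · refine aux_real (F := fun z => (pdC 2 μ z + Complex.I * pdC 3 μ z) / 2
        + μ z * ((pdC 0 μ z - Complex.I * pdC 1 μ z) / 2)) hA hconn.isPreconnected ?_ hne ?_ z hz
    · intro z hz v
      have h0 := hpd 0 z hz v
      have h1 := hpd 1 z hz v
      have h2 := hpd 2 z hz v
      have h3 := hpd 3 z hz v
      have h4 := hm z hz v
      exact (((h2.add (h3.const_mul _)).div_const 2).add (h4.mul ((h0.sub (h1.const_mul _)).div_const 2)))
    · intro x hx
      have := heq2 x hx
      simpa only [aux_pd hA hμ hx] using this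

end
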